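/- arXiv:1806.00403 — 4 statements merged into one kernel-verified Lean document; each statement's English description precedes it below -/
import Mathlib

section
/- Fix an integer k ≥ 2, a real t ∈ [0,1), and n ≥ 0, and define g_n(φ) = B̃_{φ,t,k}^n(φ). Then g_n : ℝ → ℝ is continuous and strictly increasing, and for all real φ_1 < φ_2 the number of solutions φ ∈ (φ_1, φ_2] of g_n(φ) ∈ π + 2πℤ differs from (g_n(φ_2) − g_n(φ_1))/(2π) by at most 1. -/
/-- The lift of the Blaschke product `B_{e^{iφ},t,k}` to `ℝ`:
`B̃_{φ,t,k}(θ) = k·θ − 2k·arctan(t·sin θ/(1 + t·cos θ)) + φ`. -/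
noncomputable def Blift (φ t : ℝ) (k : ℕ) (θ : ℝ) : ℝ :=
  (k : ℝ) * θ - 2 * (k : ℝ) * Real.arctan (t * Real.sin θ / (1 + t * Real.cos θ)) + φ

/-!
The lift `B̃_{φ,t,k}` is `θ ↦ k·β(θ) + φ`, where `β` lifts the factor `w ↦ (w + t)/(1 + w t)`. The
derivative of `β` is the Poisson kernel `(1 - t²)/((1 + t cos θ)² + (t sin θ)²)`, which is positive,
so `B̃_{φ,t,k}(θ)` is continuous, nondecreasing in `θ` and strictly increasing in `φ`; by induction
`φ ↦ B̃_{φ,t,k}^n(φ)` is continuous and strictly increasing. A continuous strictly increasing `f`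
takes each integer in `(f a, f b]` exactly once on `(a, b]`, and there are `⌊f b⌋ - ⌊f a⌋` of them,
which differs from `f b - f a` by less than `1`. The values `π + 2πℤ` reduce to `ℤ` by an affine
change of variable in the target.
-/

open Set Function

section Counting

variable {R : Type*} [Ring R] [LinearOrder R] [IsStrictOrderedRing R] [FloorRing R]

theorem abs_floor_sub_floor_sub_lt_one (x y : R) : |((⌊y⌋ - ⌊x⌋ : ℤ) : R) - (y - x)| < 1 := by
  have hfract : ((⌊y⌋ - ⌊x⌋ : ℤ) : R) - (y - x) = Int.fract x - Int.fract y := by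
    simp only [Int.cast_sub, Int.fract]
    abel
  rw [hfract]
  exact abs_sub_lt_of_nonneg_of_lt (Int.fract_nonneg x) (Int.fract_lt_one x)
    (Int.fract_nonneg y) (Int.fract_lt_one y)

variable [TopologicalSpace R] [OrderClosedTopology R]
variable {α : Type*} [ConditionallyCompleteLinearOrder α] [DenselyOrdered α] [TopologicalSpace α]
  [OrderTopology α] {a b : α}

theorem bijOn_floor_Ioc_of_strictMonoOn {f : α → R} (hab : a ≤ b)
    (hf : ContinuousOn f (Icc a b)) (hmono : StrictMonoOn f (Icc a b)) :
    BijOn (fun x => ⌊f x⌋) {x ∈ Ioc a b | ∃ m : ℤ, f x = m} (Ioc ⌊f a⌋ ⌊f b⌋) := by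
  have himage : f '' Ioc a b = Ioc (f a) (f b) := hf.image_Ioc_of_strictMonoOn hab hmono
  refine ⟨?mapsTo, ?injOn, ?surjOn⟩
  case mapsTo =>
    rintro x ⟨hx, m, hm⟩
    have hfx : (m : R) ∈ Ioc (f a) (f b) := hm ▸ himage ▸ mem_image_of_mem f hx
    simpa only [hm, Int.floor_intCast, ← Int.preimage_Ioc, mem_preimage] using hfx
  case injOn =>
    rintro x ⟨hx, m, hm⟩ y ⟨hy, m', hm'⟩ hxy
    have hmm' : m = m' := by simpa only [hm, hm', Int.floor_intCast] using hxy
    exact hmono.injOn (Ioc_subset_Icc_self hx) (Ioc_subset_Icc_self hy) (by rw [hm, hm', hmm'])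
  case surjOn =>
    intro m hm
    rw [← Int.preimage_Ioc, mem_preimage, ← himage] at hm
    obtain ⟨x, hx, hfx⟩ := hm
    exact ⟨x, ⟨hx, m, hfx⟩, by simp only [hfx, Int.floor_intCast]⟩

theorem finite_and_abs_ncard_int_values_sub_lt_one {f : α → R} (hab : a ≤ b)
    (hf : ContinuousOn f (Icc a b)) (hmono : StrictMonoOn f (Icc a b)) :
    {x ∈ Ioc a b | ∃ m : ℤ, f x = m}.Finite ∧
      |({x ∈ Ioc a b | ∃ m : ℤ, f x = m}.ncard : R) - (f b - f a)| < 1 := by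
  have hbij := bijOn_floor_Ioc_of_strictMonoOn hab hf hmono
  have hfloor : ⌊f a⌋ ≤ ⌊f b⌋ :=
    Int.floor_mono (hmono.monotoneOn (left_mem_Icc.2 hab) (right_mem_Icc.2 hab) hab)
  have hncard : ({x ∈ Ioc a b | ∃ m : ℤ, f x = m}.ncard : ℤ) = ⌊f b⌋ - ⌊f a⌋ := by
    rw [hbij.ncard_eq, ← Finset.coe_Ioc, ncard_coe_finset, Int.card_Ioc_of_le _ _ hfloor]
  refine ⟨hbij.finite_iff_finite.2 (finite_Ioc _ _), ?_⟩
  rw [← Int.cast_natCast, hncard]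
  exact abs_floor_sub_floor_sub_lt_one (f a) (f b)

theorem finite_and_abs_ncard_arithmetic_values_sub_lt_one {K : Type*} [Field K] [LinearOrder K]
    [IsStrictOrderedRing K] [FloorRing K] [TopologicalSpace K] [OrderTopology K] {f : α → K}
    (c : K) {p : K} (hp : 0 < p) (hab : a ≤ b) (hf : ContinuousOn f (Icc a b))
    (hmono : StrictMonoOn f (Icc a b)) :
    {x ∈ Ioc a b | ∃ m : ℤ, f x = c + p * m}.Finite ∧
      |({x ∈ Ioc a b | ∃ m : ℤ, f x = c + p * m}.ncard : K) - (f b - f a) / p| < 1 := by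
  have hnormalize (x : α) (m : ℤ) : f x = c + p * m ↔ (f x - c) / p = m := by
    rw [div_eq_iff hp.ne', sub_eq_iff_eq_add', mul_comm]
  have hdiff : (f b - f a) / p = (f b - c) / p - (f a - c) / p := by ring
  simp only [hnormalize, hdiff]
  exact finite_and_abs_ncard_int_values_sub_lt_one hab ((hf.sub continuousOn_const).div_const p)
    fun x hx y hy hxy => div_lt_div_of_pos_right (sub_lt_sub_right (hmono hx hy hxy) c) hp

end Counting

section DiagonalIterate

theorem continuous_iterate_diag {X : Type*} [TopologicalSpace X] {F : X → X → X}
    (hF : Continuous (uncurry F)) (n : ℕ) : Continuous fun x => (F x)^[n] x := by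
  induction n with
  | zero => exact continuous_id
  | succ n ih =>
    simp only [iterate_succ_apply']
    exact hF.comp (continuous_id.prodMk ih)

theorem strictMono_iterate_diag {α : Type*} [Preorder α] {F : α → α → α}
    (hmono : ∀ x, Monotone (F x)) (hstrict : ∀ y, StrictMono fun x => F x y) (n : ℕ) :
    StrictMono fun x => (F x)^[n] x := by
  induction n with
  | zero => exact strictMono_id
  | succ n ih =>
    intro x y hxy
    simp only [iterate_succ_apply']
    exact (hmono x (ih hxy).le).trans_lt (hstrict _ hxy)

end DiagonalIterate

section BlaschkeFactor

open Real

variable {t : ℝ}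

/-- The lift to `ℝ` of the Blaschke factor `w ↦ (w + t) / (1 + w * t)` of the unit circle: on
`w = exp (i * θ)` the factor equals `w * conj (1 + w * t) / (1 + w * t)`, whose argument is
`θ` minus twice that of `1 + w * t`. The lift `Blift` is built from `k` copies of it. -/
noncomputable def blaschkeFactorLift (t θ : ℝ) : ℝ :=
  θ - 2 * arctan (t * sin θ / (1 + t * cos θ))

theorem one_add_mul_cos_pos (ht : |t| < 1) (θ : ℝ) : 0 < 1 + t * cos θ := by
  have hcos : |t * cos θ| < 1 := by
    rw [abs_mul]
    exact mul_lt_one_of_nonneg_of_lt_one_left (abs_nonneg t) ht (abs_cos_le_one θ)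
  linarith [neg_lt_of_abs_lt hcos]

theorem hasDerivAt_blaschkeFactorLift {θ : ℝ} (hθ : 1 + t * cos θ ≠ 0) :
    HasDerivAt (blaschkeFactorLift t)
      ((1 - t ^ 2) / ((1 + t * cos θ) ^ 2 + (t * sin θ) ^ 2)) θ := by
  have hquot : HasDerivAt (fun θ => t * sin θ / (1 + t * cos θ))
      ((t * cos θ * (1 + t * cos θ) - t * sin θ * (t * -sin θ)) / (1 + t * cos θ) ^ 2) θ :=
    ((hasDerivAt_sin θ).const_mul t).fun_div (((hasDerivAt_cos θ).const_mul t).const_add 1) hθ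
  refine ((hasDerivAt_id' θ).fun_sub (hquot.arctan.const_mul 2)).congr_deriv ?_
  have : (1 + t * cos θ) ^ 2 + (t * sin θ) ^ 2 ≠ 0 := by positivity
  have hone_add_sq : 1 + (t * sin θ / (1 + t * cos θ)) ^ 2 =
      ((1 + t * cos θ) ^ 2 + (t * sin θ) ^ 2) / (1 + t * cos θ) ^ 2 := by
    field_simp
  rw [hone_add_sq]
  field_simp
  linear_combination (-t ^ 2) * sin_sq_add_cos_sq θ

theorem continuous_blaschkeFactorLift (ht : |t| < 1) : Continuous (blaschkeFactorLift t) :=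
  continuous_iff_continuousAt.2 fun θ =>
    (hasDerivAt_blaschkeFactorLift (one_add_mul_cos_pos ht θ).ne').continuousAt

theorem strictMono_blaschkeFactorLift (ht : |t| < 1) : StrictMono (blaschkeFactorLift t) := by
  refine strictMono_of_deriv_pos fun θ => ?_
  have hcos : 0 < 1 + t * cos θ := one_add_mul_cos_pos ht θ
  have hnum : 0 < 1 - t ^ 2 := sub_pos.2 ((sq_lt_one_iff_abs_lt_one t).2 ht)
  rw [(hasDerivAt_blaschkeFactorLift hcos.ne').deriv]
  positivity

end BlaschkeFactor

section Blift

theorem Blift_eq_mul_blaschkeFactorLift_add (φ t : ℝ) (k : ℕ) (θ : ℝ) :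
    Blift φ t k θ = k * blaschkeFactorLift t θ + φ := by
  unfold Blift blaschkeFactorLift
  ring

theorem continuous_uncurry_Blift {t : ℝ} (ht : |t| < 1) (k : ℕ) :
    Continuous (uncurry fun φ => Blift φ t k) := by
  have hβ := continuous_blaschkeFactorLift ht
  simp only [uncurry_def, Blift_eq_mul_blaschkeFactorLift_add]
  fun_prop

theorem monotone_Blift {t : ℝ} (ht : |t| < 1) (φ : ℝ) (k : ℕ) : Monotone (Blift φ t k) := by
  intro θ θ' hθ
  simp only [Blift_eq_mul_blaschkeFactorLift_add]
  gcongr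
  exact (strictMono_blaschkeFactorLift ht).monotone hθ

theorem strictMono_Blift_param (t : ℝ) (k : ℕ) (θ : ℝ) : StrictMono fun φ => Blift φ t k θ :=
  fun _ _ hφ => add_lt_add_right hφ _

end Blift

theorem stmt8_general (k : ℕ) {t : ℝ} (ht : |t| < 1) (n : ℕ) :
    Continuous (fun φ : ℝ => (Blift φ t k)^[n] φ) ∧
    StrictMono (fun φ : ℝ => (Blift φ t k)^[n] φ) ∧
    ∀ φ1 φ2 : ℝ, φ1 ≤ φ2 →
      ({φ ∈ Ioc φ1 φ2 | ∃ m : ℤ, (Blift φ t k)^[n] φ = Real.pi + 2 * Real.pi * m}).Finite ∧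
      |(({φ ∈ Ioc φ1 φ2 | ∃ m : ℤ,
            (Blift φ t k)^[n] φ = Real.pi + 2 * Real.pi * m}).ncard : ℝ) -
          ((Blift φ2 t k)^[n] φ2 - (Blift φ1 t k)^[n] φ1) / (2 * Real.pi)| < 1 := by
  have hcont : Continuous fun φ => (Blift φ t k)^[n] φ :=
    continuous_iterate_diag (continuous_uncurry_Blift ht k) n
  have hmono : StrictMono fun φ => (Blift φ t k)^[n] φ :=
    strictMono_iterate_diag (fun φ => monotone_Blift ht φ k) (strictMono_Blift_param t k) n
  exact ⟨hcont, hmono, fun φ1 φ2 hφ => finite_and_abs_ncard_arithmetic_values_sub_lt_one Real.pi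
    Real.two_pi_pos hφ hcont.continuousOn (hmono.strictMonoOn _)⟩

theorem stmt8 (k : ℕ) (hk : 2 ≤ k) (t : ℝ) (ht0 : 0 ≤ t) (ht1 : t < 1) (n : ℕ) :
    Continuous (fun φ : ℝ => (Blift φ t k)^[n] φ) ∧
    StrictMono (fun φ : ℝ => (Blift φ t k)^[n] φ) ∧
    ∀ φ1 φ2 : ℝ, φ1 < φ2 →
      ({φ ∈ Set.Ioc φ1 φ2 | ∃ m : ℤ,
          (Blift φ t k)^[n] φ = Real.pi + 2 * Real.pi * m}).Finite ∧
      |(({φ ∈ Set.Ioc φ1 φ2 | ∃ m : ℤ,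
            (Blift φ t k)^[n] φ = Real.pi + 2 * Real.pi * m}).ncard : ℝ) -
          ((Blift φ2 t k)^[n] φ2 - (Blift φ1 t k)^[n] φ1) / (2 * Real.pi)| ≤ 1 := by
  obtain ⟨hcont, hmono, hcount⟩ := stmt8_general k (abs_lt.2 ⟨by linarith, ht1⟩) n
  exact ⟨hcont, hmono, fun φ1 φ2 h => (hcount φ1 φ2 h.le).imp_right le_of_lt⟩
end

section
/- Fix an integer k ≥ 2 and set t_c = (k−1)/(k+1). Define h(t) = 2π − 2·arctan(√(((k+1)²·t² − (k−1)²)/((k+1)²·(1 − t²)))) − 2·arccos(((k+1)·t² − k + 1)/(2t)). Then for every t ∈ (t_c, 1): the argument of the square root is nonnegative and the argument of arccos lies in [−1, 1]; the function h is strictly increasing on (t_c, 1); and h(t) < π. -/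
/-- The function `h(t) = B̃_{φ_e(t),t,k+1}(θ_•(t))`, in closed form:
`h(t) = 2π − 2·arctan(√(((k+1)²t² − (k−1)²)/((k+1)²(1 − t²)))) −
2·arccos(((k+1)t² − k + 1)/(2t))`. -/
noncomputable def hVal (k : ℕ) (t : ℝ) : ℝ :=
  2 * Real.pi -
    2 * Real.arctan (Real.sqrt ((((k : ℝ) + 1) ^ 2 * t ^ 2 - ((k : ℝ) - 1) ^ 2) /
      (((k : ℝ) + 1) ^ 2 * (1 - t ^ 2)))) -
    2 * Real.arccos ((((k : ℝ) + 1) * t ^ 2 - (k : ℝ) + 1) / (2 * t))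

/-!
In the triangle with vertices `0`, `1` and `w = 1 + t e^{iθ_•}`, the angle at `0` is the
arctangent occurring in `h(t)` and the angle at `1` is the arccosine, so the angle at `w` is
`h(t) / 2`. Computing its cosine from the other two gives the closed form
`h(t) = 2 arccos (tan (arcsin t_c) / tan (arcsin t))`.
Since `tan ∘ arcsin` is increasing, the quotient decreases strictly with `t` inside `(0, 1)`, so
that `h` is strictly increasing and stays below `2 arccos 0 = π`.
-/

open Real Set

lemma sin_arctan_sqrt_div {a b : ℝ} (ha : 0 ≤ a) (hb : 0 < b) :
    sin (arctan √(a / b)) = √a / √(a + b) := by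
  rw [sin_arctan, sq_sqrt (by positivity), one_add_div hb.ne', sqrt_div' _ hb.le,
    sqrt_div' _ hb.le, add_comm b a, div_div_div_cancel_right₀ (sqrt_pos.2 hb).ne']

lemma cos_arctan_sqrt_div {a b : ℝ} (ha : 0 ≤ a) (hb : 0 < b) :
    cos (arctan √(a / b)) = √b / √(a + b) := by
  rw [cos_arctan, sq_sqrt (by positivity), one_add_div hb.ne', sqrt_div' _ hb.le, add_comm b a,
    one_div_div]

lemma strictMonoOn_tan_arcsin : StrictMonoOn (fun x ↦ tan (arcsin x)) (Ioo (-1) 1) :=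
  strictMonoOn_tan.comp (strictMonoOn_arcsin.mono Ioo_subset_Icc_self) fun _ hx ↦
    ⟨neg_pi_div_two_lt_arcsin.2 hx.1, arcsin_lt_pi_div_two.2 hx.2⟩

lemma tan_arcsin_pos {x : ℝ} (hx₀ : 0 < x) (hx₁ : x < 1) : 0 < tan (arcsin x) :=
  tan_pos_of_pos_of_lt_pi_div_two (arcsin_pos.2 hx₀) (arcsin_lt_pi_div_two.2 hx₁)

lemma strictMonoOn_arccos_tan_arcsin_div {c : ℝ} (hc : 0 < c) :
    StrictMonoOn (fun t ↦ arccos (tan (arcsin c) / tan (arcsin t))) (Ioo c 1) := by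
  have quotient_mem : ∀ t ∈ Ioo c 1, tan (arcsin c) / tan (arcsin t) ∈ Icc (-1) 1 := by
    intro t ⟨hct, ht₁⟩
    have tan_c_pos := tan_arcsin_pos hc (hct.trans ht₁)
    have tan_lt : tan (arcsin c) < tan (arcsin t) :=
      strictMonoOn_tan_arcsin ⟨by linarith, hct.trans ht₁⟩ ⟨by linarith, ht₁⟩ hct
    exact ⟨neg_one_lt_zero.le.trans (div_pos tan_c_pos (tan_c_pos.trans tan_lt)).le,
      div_le_one_of_le₀ tan_lt.le (tan_c_pos.trans tan_lt).le⟩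
  intro s hs t ht hst
  refine strictAntiOn_arccos (quotient_mem t ht) (quotient_mem s hs) ?_
  exact div_lt_div_of_pos_left (tan_arcsin_pos hc (hs.1.trans hs.2))
    (tan_arcsin_pos (hc.trans hs.1) hs.2)
    (strictMonoOn_tan_arcsin ⟨by linarith [hs.1], hs.2⟩ ⟨by linarith [ht.1], ht.2⟩ hst)

lemma sq_sub_sq_nonneg_of_abs_le {a b : ℝ} (h : |a| ≤ b) : 0 ≤ b ^ 2 - a ^ 2 :=
  sub_nonneg.2 (sq_le_sq.2 (h.trans (le_abs_self b)))

/-- Half of `h(t)`, written in terms of `c = t_c` instead of `k`: the angle at `w` of the triangle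
with vertices `0`, `1` and `w = 1 + t e^{iθ}`, where `θ = π - arccos ((t² - c) / ((1 - c) t))` is
the tangency angle `θ_•(t)`. -/
noncomputable def apexAngle (c t : ℝ) : ℝ :=
  π - arctan √((t ^ 2 - c ^ 2) / (1 - t ^ 2)) - arccos ((t ^ 2 - c) / ((1 - c) * t))

section ApexAngle

variable {c t : ℝ}

lemma one_sub_sq_div_mul (hc : c ≠ 1) (ht : t ≠ 0) :
    1 - ((t ^ 2 - c) / ((1 - c) * t)) ^ 2 =
      (1 - t ^ 2) * (t ^ 2 - c ^ 2) / ((1 - c) * t) ^ 2 := by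
  field_simp
  ring

lemma abs_sq_sub_div_mul_le_one (hct : |c| ≤ t) (ht₀ : 0 < t) (ht₁ : t < 1) :
    |(t ^ 2 - c) / ((1 - c) * t)| ≤ 1 := by
  have one_sub_sq_nonneg : 0 ≤ 1 - t ^ 2 := by nlinarith
  have sq_sub_sq_nonneg : 0 ≤ t ^ 2 - c ^ 2 := sq_sub_sq_nonneg_of_abs_le hct
  have hc₁ : c < 1 := (le_abs_self c).trans_lt (hct.trans_lt ht₁)
  rw [← sq_le_one_iff_abs_le_one, ← sub_nonneg, one_sub_sq_div_mul hc₁.ne ht₀.ne']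
  positivity

lemma sin_arccos_sq_sub_div_mul (hc : c < 1) (ht₀ : 0 < t) (ht₁ : t < 1) :
    sin (arccos ((t ^ 2 - c) / ((1 - c) * t))) =
      √(1 - t ^ 2) * √(t ^ 2 - c ^ 2) / ((1 - c) * t) := by
  have one_sub_sq_nonneg : 0 ≤ 1 - t ^ 2 := by nlinarith
  have denom_nonneg : 0 ≤ (1 - c) * t := mul_nonneg (sub_nonneg.2 hc.le) ht₀.le
  rw [sin_arccos, one_sub_sq_div_mul hc.ne ht₀.ne', sqrt_div' _ (sq_nonneg _),
    sqrt_sq denom_nonneg, sqrt_mul one_sub_sq_nonneg]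

lemma cos_apexAngle (hct : |c| ≤ t) (ht₀ : 0 < t) (ht₁ : t < 1) :
    cos (apexAngle c t) = tan (arcsin c) / tan (arcsin t) := by
  have hc₁ : c < 1 := (le_abs_self c).trans_lt (hct.trans_lt ht₁)
  have one_sub_t_sq_pos : 0 < 1 - t ^ 2 := by nlinarith
  have sq_sub_sq_nonneg : 0 ≤ t ^ 2 - c ^ 2 := sq_sub_sq_nonneg_of_abs_le hct
  have arccos_arg_mem := abs_le.1 (abs_sq_sub_div_mul_le_one hct ht₀ ht₁)
  rw [apexAngle, sub_sub, cos_pi_sub, cos_add,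
    sin_arctan_sqrt_div sq_sub_sq_nonneg one_sub_t_sq_pos,
    cos_arctan_sqrt_div sq_sub_sq_nonneg one_sub_t_sq_pos, sub_add_sub_cancel',
    sin_arccos_sq_sub_div_mul hc₁ ht₀ ht₁, cos_arccos arccos_arg_mem.1 arccos_arg_mem.2, tan_arcsin,
    tan_arcsin]
  have hc' : 1 - c ≠ 0 := (sub_pos.2 hc₁).ne'
  field_simp
  rw [sq_sqrt sq_sub_sq_nonneg]
  ring

lemma sin_apexAngle (hct : |c| ≤ t) (ht₀ : 0 < t) (ht₁ : t < 1) :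
    sin (apexAngle c t) = √(t ^ 2 - c ^ 2) / (√(1 - c ^ 2) * t) := by
  have hc₁ : c < 1 := (le_abs_self c).trans_lt (hct.trans_lt ht₁)
  have one_sub_t_sq_pos : 0 < 1 - t ^ 2 := by nlinarith
  have sq_sub_sq_nonneg : 0 ≤ t ^ 2 - c ^ 2 := sq_sub_sq_nonneg_of_abs_le hct
  have arccos_arg_mem := abs_le.1 (abs_sq_sub_div_mul_le_one hct ht₀ ht₁)
  rw [apexAngle, sub_sub, sin_pi_sub, sin_add,
    sin_arctan_sqrt_div sq_sub_sq_nonneg one_sub_t_sq_pos,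
    cos_arctan_sqrt_div sq_sub_sq_nonneg one_sub_t_sq_pos, sub_add_sub_cancel',
    sin_arccos_sq_sub_div_mul hc₁ ht₀ ht₁, cos_arccos arccos_arg_mem.1 arccos_arg_mem.2]
  have hc' : 1 - c ≠ 0 := (sub_pos.2 hc₁).ne'
  field_simp
  rw [sq_sqrt one_sub_t_sq_pos.le]
  ring

lemma apexAngle_mem_Icc (hct : |c| ≤ t) (ht₀ : 0 < t) (ht₁ : t < 1) :
    apexAngle c t ∈ Icc 0 π := by
  have arctan_term_nonneg := arctan_nonneg.2 (sqrt_nonneg ((t ^ 2 - c ^ 2) / (1 - t ^ 2)))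
  have arctan_term_lt := arctan_lt_pi_div_two √((t ^ 2 - c ^ 2) / (1 - t ^ 2))
  have arccos_term_nonneg := arccos_nonneg ((t ^ 2 - c) / ((1 - c) * t))
  have arccos_term_le_pi := arccos_le_pi ((t ^ 2 - c) / ((1 - c) * t))
  have neg_pi_lt : -π < apexAngle c t := by
    unfold apexAngle
    linarith
  have sin_nonneg : 0 ≤ sin (apexAngle c t) := by
    rw [sin_apexAngle hct ht₀ ht₁]
    positivity
  constructor
  · contrapose! sin_nonneg
    exact sin_neg_of_neg_of_neg_pi_lt sin_nonneg neg_pi_lt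
  · unfold apexAngle
    linarith

theorem apexAngle_eq_arccos (hct : |c| ≤ t) (ht₀ : 0 < t) (ht₁ : t < 1) :
    apexAngle c t = arccos (tan (arcsin c) / tan (arcsin t)) := by
  have apexAngle_mem := apexAngle_mem_Icc hct ht₀ ht₁
  rw [← cos_apexAngle hct ht₀ ht₁, arccos_cos apexAngle_mem.1 apexAngle_mem.2]

theorem strictMonoOn_apexAngle (hc : 0 < c) : StrictMonoOn (apexAngle c) (Ioo c 1) :=
  (strictMonoOn_arccos_tan_arcsin_div hc).congr fun _ ht ↦
    (apexAngle_eq_arccos ((abs_of_pos hc).trans_le ht.1.le) (hc.trans ht.1) ht.2).symm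

theorem apexAngle_lt_pi_div_two (hc : 0 < c) (hct : c ≤ t) (ht₁ : t < 1) :
    apexAngle c t < π / 2 := by
  have ht₀ : 0 < t := hc.trans_le hct
  rw [apexAngle_eq_arccos ((abs_of_pos hc).trans_le hct) ht₀ ht₁, arccos_lt_pi_div_two]
  exact div_pos (tan_arcsin_pos hc (hct.trans_lt ht₁)) (tan_arcsin_pos ht₀ ht₁)

end ApexAngle

/-- The function `h` of `hVal`, with the branching number `κ` allowed to be any real number. -/
noncomputable def hValReal (κ t : ℝ) : ℝ :=
  2 * π - 2 * arctan √(((κ + 1) ^ 2 * t ^ 2 - (κ - 1) ^ 2) / ((κ + 1) ^ 2 * (1 - t ^ 2))) -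
    2 * arccos (((κ + 1) * t ^ 2 - κ + 1) / (2 * t))

section BranchingNumber

variable {κ : ℝ}

lemma arctan_radicand_eq (hκ : κ + 1 ≠ 0) (t : ℝ) :
    ((κ + 1) ^ 2 * t ^ 2 - (κ - 1) ^ 2) / ((κ + 1) ^ 2 * (1 - t ^ 2)) =
      (t ^ 2 - ((κ - 1) / (κ + 1)) ^ 2) / (1 - t ^ 2) := by
  rw [← mul_div_mul_left _ (1 - t ^ 2) (pow_ne_zero 2 hκ)]
  congr 1
  field_simp

lemma arccos_argument_eq (hκ : κ + 1 ≠ 0) (t : ℝ) :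
    ((κ + 1) * t ^ 2 - κ + 1) / (2 * t) =
      (t ^ 2 - (κ - 1) / (κ + 1)) / ((1 - (κ - 1) / (κ + 1)) * t) := by
  rw [← mul_div_mul_left _ ((1 - (κ - 1) / (κ + 1)) * t) hκ]
  congr 1 <;> field_simp <;> ring

lemma hValReal_eq_two_mul_apexAngle (hκ : κ + 1 ≠ 0) (t : ℝ) :
    hValReal κ t = 2 * apexAngle ((κ - 1) / (κ + 1)) t := by
  rw [hValReal, apexAngle, arctan_radicand_eq hκ, arccos_argument_eq hκ]
  ring

end BranchingNumber

theorem stmt12_general (κ : ℝ) (hκ : 1 < κ) :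
    (∀ t ∈ Ioo ((κ - 1) / (κ + 1)) 1,
      0 ≤ ((κ + 1) ^ 2 * t ^ 2 - (κ - 1) ^ 2) / ((κ + 1) ^ 2 * (1 - t ^ 2)) ∧
      -1 ≤ ((κ + 1) * t ^ 2 - κ + 1) / (2 * t) ∧
      ((κ + 1) * t ^ 2 - κ + 1) / (2 * t) ≤ 1) ∧
    StrictMonoOn (hValReal κ) (Ioo ((κ - 1) / (κ + 1)) 1) ∧
    ∀ t ∈ Ioo ((κ - 1) / (κ + 1)) 1, hValReal κ t < π := by
  have hκ₁ : κ + 1 ≠ 0 := by linarith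
  have hc : 0 < (κ - 1) / (κ + 1) := div_pos (by linarith) (by linarith)
  refine ⟨fun t ⟨hct, ht₁⟩ ↦ ⟨?_, ?_⟩, fun s hs t ht hst ↦ ?_, fun t ⟨hct, ht₁⟩ ↦ ?_⟩
  · rw [arctan_radicand_eq hκ₁]
    exact div_nonneg (sub_nonneg.2 (pow_le_pow_left₀ hc.le hct.le 2)) (by nlinarith)
  · rw [arccos_argument_eq hκ₁]
    exact abs_le.1 (abs_sq_sub_div_mul_le_one ((abs_of_pos hc).trans_le hct.le) (hc.trans hct) ht₁)
  · rw [hValReal_eq_two_mul_apexAngle hκ₁, hValReal_eq_two_mul_apexAngle hκ₁]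
    exact mul_lt_mul_of_pos_left (strictMonoOn_apexAngle hc hs ht hst) two_pos
  · rw [hValReal_eq_two_mul_apexAngle hκ₁]
    linarith [apexAngle_lt_pi_div_two hc hct.le ht₁]

theorem stmt12 (k : ℕ) (hk : 2 ≤ k) :
    (∀ t ∈ Set.Ioo (((k : ℝ) - 1) / ((k : ℝ) + 1)) 1,
      0 ≤ (((k : ℝ) + 1) ^ 2 * t ^ 2 - ((k : ℝ) - 1) ^ 2) / (((k : ℝ) + 1) ^ 2 * (1 - t ^ 2)) ∧
      -1 ≤ (((k : ℝ) + 1) * t ^ 2 - (k : ℝ) + 1) / (2 * t) ∧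
      (((k : ℝ) + 1) * t ^ 2 - (k : ℝ) + 1) / (2 * t) ≤ 1) ∧
    StrictMonoOn (hVal k) (Set.Ioo (((k : ℝ) - 1) / ((k : ℝ) + 1)) 1) ∧
    ∀ t ∈ Set.Ioo (((k : ℝ) - 1) / ((k : ℝ) + 1)) 1, hVal k t < Real.pi :=
  stmt12_general k (Nat.one_lt_cast.2 hk)
end

section
/- Let F : ℝ → ℝ be (the lift of) a C² expanding circle map of degree d ≥ 2. For every ε ∈ (0,1) there exist δ > 0 and C > 0 with the following property: for every C² expanding circle map G of degree d (given by its lift) with ‖F − G‖_{C²} < δ, there exists a conjugacy H from F to G (a continuous strictly increasing H : ℝ → ℝ with H(x+1) = H(x) + 1 and H∘F = G∘H) which is Hölder continuous with exponent 1 − ε: |H(x) − H(y)| ≤ C·|x − y|^{1−ε} for all x, y with |x − y| ≤ 1. -/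
/-- `F : ℝ → ℝ` is the lift of a `C²` expanding circle map of degree `d`:
it is `C²`, satisfies `F(x+1) = F(x) + d`, has positive derivative, and there are
`c > 0`, `λ > 1` with `(Fⁿ)'(x) ≥ c·λⁿ` for all `x` and all `n ≥ 1`. -/
def ExpandingLift (d : ℕ) (F : ℝ → ℝ) : Prop :=
  ContDiff ℝ 2 F ∧ (∀ x : ℝ, F (x + 1) = F x + d) ∧ (∀ x : ℝ, 0 < deriv F x) ∧
  ∃ c : ℝ, 0 < c ∧ ∃ lam : ℝ, 1 < lam ∧
    ∀ x : ℝ, ∀ n : ℕ, 1 ≤ n → c * lam ^ n ≤ deriv (F^[n]) x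

/-!
Both maps are semiconjugated to `x ↦ d x` by the coordinates `lim Fⁿ / dⁿ` and `lim Gⁿ / dⁿ`, and
`H` is the first coordinate followed by the inverse of the second. Since an iterate of `F` doubles
distances, `H` is as close to the identity as that iterate of `G` is to that of `F`. Hence, for `G`
close to `F` in `C¹`, the ratio of the derivatives of `F` at `x` and of `G` at `H x` is at most
`λ ^ ε`, and the quotient `|H x - H y| / |x - y|` shrinks by at most the factor `λ ^ ε` under one
application of `F`, as long as `x` and `y` are close. Iterating until `Fⁿ x` and `Fⁿ y` are at
distance of order one takes at most `n ≈ log |x - y|⁻¹ / log λ` steps, which costs a factor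
`λ ^ (n ε) ≈ |x - y| ^ (-ε)`.
-/

open Filter Function Set Topology
open scoped NNReal

section Metric

variable {α : Type*} [PseudoMetricSpace α]

theorem exists_forall_dist_iterate_lt {F : α → α} (hF : UniformContinuous F) (n : ℕ) {κ : ℝ}
    (hκ : 0 < κ) : ∃ δ > 0, ∀ G : α → α, (∀ x, dist (F x) (G x) < δ) →
      ∀ x, dist (F^[n] x) (G^[n] x) < κ := by
  induction n generalizing κ with
  | zero => exact ⟨1, one_pos, fun G _ x => by simpa using hκ⟩
  | succ n ih =>
    obtain ⟨η, hη, hFη⟩ := Metric.uniformContinuous_iff.1 hF (κ / 2) (half_pos hκ)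
    obtain ⟨δ, hδ, hFG⟩ := ih hη
    refine ⟨min δ (κ / 2), by positivity, fun G hG x => ?_⟩
    rw [iterate_succ_apply', iterate_succ_apply']
    have h_orbit := hFG G (fun z => (hG z).trans_le (min_le_left _ _)) x
    calc dist (F (F^[n] x)) (G (G^[n] x))
        ≤ dist (F (F^[n] x)) (F (G^[n] x)) + dist (F (G^[n] x)) (G (G^[n] x)) :=
          dist_triangle _ _ _
      _ < κ / 2 + κ / 2 := add_lt_add (hFη h_orbit) ((hG _).trans_le (min_le_right _ _))
      _ = κ := add_halves κ

theorem dist_semiconj_self_le {f g H : α → α} {a κ : ℝ} (ha : 1 < a)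
    (hf : ∀ x y, a * dist x y ≤ dist (f x) (f y)) (hfg : ∀ x, dist (f x) (g x) ≤ κ)
    (hH : Semiconj H f g) (hbdd : BddAbove (range fun x => dist (H x) x)) (x : α) :
    dist (H x) x ≤ κ / (a - 1) := by
  set D := ⨆ z, dist (H z) z
  have hD : ∀ z, dist (H z) z ≤ D := le_ciSup hbdd
  have h_contract : ∀ z, dist (H z) z ≤ (κ + D) / a := fun z => by
    rw [le_div_iff₀' (by positivity)]
    calc a * dist (H z) z ≤ dist (f (H z)) (f z) := hf _ _
      _ ≤ dist (f (H z)) (g (H z)) + dist (g (H z)) (f z) := dist_triangle _ _ _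
      _ ≤ κ + D := add_le_add (hfg _) (hH z ▸ hD (f z))
  have hDκ : D ≤ (κ + D) / a := have : Nonempty α := ⟨x⟩; ciSup_le h_contract
  rw [le_div_iff₀' (by positivity)] at hDκ
  refine (hD x).trans ?_
  rw [le_div_iff₀ (sub_pos.2 ha)]
  linarith

theorem exists_forall_norm_le_mul_norm {E : Type*} [SeminormedAddCommGroup E] {f : α → E}
    {m q : ℝ} (hf : UniformContinuous f) (hm : 0 < m) (hfm : ∀ x, m ≤ ‖f x‖) (hq : 1 < q) :
    ∃ ρ > 0, ∃ δ > 0, ∀ g : α → E, (∀ x, dist (f x) (g x) < δ) →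
      ∀ x y, dist x y < ρ → ‖f x‖ ≤ q * ‖g y‖ := by
  have hq0 : 0 < q := one_pos.trans hq
  set s := (q - 1) * m / q
  have hs : 0 < s := div_pos (mul_pos (sub_pos.2 hq) hm) hq0
  obtain ⟨ρ, hρ, hfρ⟩ := Metric.uniformContinuous_iff.1 hf (s / 2) (half_pos hs)
  refine ⟨ρ, hρ, s / 2, half_pos hs, fun g hg x y hxy => ?_⟩
  have h_sub : ‖f x‖ - s ≤ ‖g y‖ := by
    have := dist_triangle (f x) (f y) (g y)
    have := norm_sub_norm_le (f x) (g y)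
    rw [← dist_eq_norm] at this
    linarith [hfρ hxy, hg y]
  calc ‖f x‖ ≤ ‖f x‖ + (q - 1) * (‖f x‖ - m) :=
        le_add_of_nonneg_right (mul_nonneg (sub_pos.2 hq).le (sub_nonneg.2 (hfm x)))
    _ = q * (‖f x‖ - s) := by simp only [s]; field_simp; ring
    _ ≤ q * ‖g y‖ := by gcongr

theorem dist_div_dist_le_three {H : α → α} {r : ℝ} (hH : ∀ x, dist (H x) x ≤ r) {x y : α}
    (hxy : r < dist x y) : dist (H x) (H y) / dist x y ≤ 3 := by
  have hr : 0 ≤ r := dist_nonneg.trans (hH x)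
  rw [div_le_iff₀ (hr.trans_lt hxy)]
  have := dist_triangle4 (H x) x y (H y)
  linarith [hH x, hH y, dist_comm y (H y)]

end Metric

section Holder

theorem exists_first_lt_le_max {u : ℕ → ℝ} {L r : ℝ} (hL : 0 ≤ L)
    (hu : ∀ k, u (k + 1) ≤ L * u k) (hr : ∃ n, r < u n) :
    ∃ n, (∀ k < n, u k ≤ r) ∧ r < u n ∧ u n ≤ max (u 0) (L * r) := by
  classical
  have h_before : ∀ k < Nat.find hr, u k ≤ r := fun k hk => not_lt.1 (Nat.find_min hr hk)
  refine ⟨Nat.find hr, h_before, Nat.find_spec hr, ?_⟩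
  rcases h : Nat.find hr with _ | k
  · exact le_max_left _ _
  · have hk : u k ≤ r := h_before k (by omega)
    exact ((hu k).trans (mul_le_mul_of_nonneg_left hk hL)).trans (le_max_right _ _)

theorem rpow_pow_mul_le {lam c M t ε : ℝ} {n : ℕ} (hlam : 0 ≤ lam) (hc : 0 < c) (ht : 0 < t)
    (hε : 0 ≤ ε) (h : c * lam ^ n * t ≤ M) :
    (lam ^ ε) ^ n * t ≤ (M / c) ^ ε * t ^ (1 - ε) := by
  have hM : 0 ≤ M := le_trans (by positivity) h
  have h_pow : lam ^ n ≤ M / c / t := by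
    rw [le_div_iff₀ ht, le_div_iff₀ hc]
    linarith
  calc (lam ^ ε) ^ n * t = (lam ^ n) ^ ε * t := by rw [Real.rpow_pow_comm hlam]
    _ ≤ (M / c / t) ^ ε * t := by gcongr
    _ = (M / c) ^ ε * t ^ (1 - ε) := by
      rw [Real.div_rpow (by positivity) ht.le, Real.rpow_sub ht, Real.rpow_one]
      ring

variable {α : Type*} [MetricSpace α]

theorem exists_lt_dist_iterate {F : α → α} {c lam : ℝ} (hc : 0 < c) (hlam : 1 < lam)
    (hF : ∀ n x y, c * lam ^ n * dist x y ≤ dist (F^[n] x) (F^[n] y)) {x y : α} (hxy : x ≠ y)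
    (R : ℝ) : ∃ n, R < dist (F^[n] x) (F^[n] y) := by
  have h_pos : 0 < c * dist x y := mul_pos hc (dist_pos.2 hxy)
  obtain ⟨n, hn⟩ := pow_unbounded_of_one_lt (R / (c * dist x y)) hlam
  rw [div_lt_iff₀ h_pos] at hn
  exact ⟨n, by linarith [hF n x y]⟩

theorem dist_le_mul_rpow_of_expanding {F H : α → α} {L : ℝ≥0} {c lam r ε : ℝ} (hc : 0 < c)
    (hlam : 1 < lam) (hε : 0 ≤ ε) (hFL : LipschitzWith L F)
    (hF : ∀ n x y, c * lam ^ n * dist x y ≤ dist (F^[n] x) (F^[n] y))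
    (hH : ∀ x, dist (H x) x ≤ r)
    (h_step : ∀ x y, dist x y ≤ r → dist (H x) (H y) / dist x y ≤
      lam ^ ε * (dist (H (F x)) (H (F y)) / dist (F x) (F y)))
    {x y : α} (hxy : dist x y ≤ 1) :
    dist (H x) (H y) ≤ 3 * (max 1 (L * r) / c) ^ ε * dist x y ^ (1 - ε) := by
  rcases eq_or_ne x y with rfl | hne
  · simp only [dist_self]
    positivity
  have h_pos : 0 < dist x y := dist_pos.2 hne
  have hq : 0 < lam ^ ε := Real.rpow_pos_of_pos (one_pos.trans hlam) ε
  obtain ⟨n, h_before, hn_lt, hn_le⟩ := exists_first_lt_le_max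
    (u := fun k => dist (F^[k] x) (F^[k] y)) L.coe_nonneg
    (fun k => by simpa only [iterate_succ_apply'] using hFL.dist_le_mul _ _)
    (exists_lt_dist_iterate hc hlam hF hne r)
  set R : ℕ → ℝ := fun k => dist (H (F^[k] x)) (H (F^[k] y)) / dist (F^[k] x) (F^[k] y)
  have h_telescope : (lam ^ ε)⁻¹ ^ n * R 0 ≤ R n :=
    geom_le (inv_nonneg.2 hq.le) n fun k hk => by
      rw [inv_mul_le_iff₀ hq]
      simpa only [R, iterate_succ_apply'] using h_step _ _ (h_before k hk)
  have hR : R 0 ≤ (lam ^ ε) ^ n * 3 := by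
    rw [inv_pow, inv_mul_le_iff₀ (pow_pos hq n)] at h_telescope
    exact h_telescope.trans (by gcongr; exact dist_div_dist_le_three hH hn_lt)
  have hM : c * lam ^ n * dist x y ≤ max 1 (L * r) :=
    (hF n x y).trans (hn_le.trans (max_le_max_right _ hxy))
  calc dist (H x) (H y) = R 0 * dist x y := (div_mul_cancel₀ _ h_pos.ne').symm
    _ ≤ (lam ^ ε) ^ n * 3 * dist x y := by gcongr
    _ = 3 * ((lam ^ ε) ^ n * dist x y) := by ring
    _ ≤ 3 * ((max 1 (L * r) / c) ^ ε * dist x y ^ (1 - ε)) :=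
      mul_le_mul_of_nonneg_left
        (rpow_pow_mul_le (one_pos.trans hlam).le hc h_pos hε hM) zero_le_three
    _ = 3 * (max 1 (L * r) / c) ^ ε * dist x y ^ (1 - ε) := by ring

end Holder

section Derivative

theorem exists_mem_uIcc_dist_eq_abs_deriv_mul {f : ℝ → ℝ} (hf : Differentiable ℝ f) (x y : ℝ) :
    ∃ ξ ∈ uIcc x y, dist (f x) (f y) = |deriv f ξ| * dist x y := by
  wlog hxy : x < y generalizing x y
  · rcases (not_lt.1 hxy).eq_or_lt with rfl | hyx
    · exact ⟨y, left_mem_uIcc, by simp only [dist_self, mul_zero]⟩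
    · simpa only [uIcc_comm, dist_comm] using this y x hyx
  obtain ⟨ξ, hξ, hslope⟩ := exists_deriv_eq_slope f hxy hf.continuous.continuousOn
    hf.differentiableOn
  refine ⟨ξ, Icc_subset_uIcc (Ioo_subset_Icc_self hξ), ?_⟩
  rw [hslope, abs_div, dist_comm, dist_comm x, Real.dist_eq, Real.dist_eq,
    div_mul_cancel₀ _ (abs_pos.2 (sub_ne_zero.2 hxy.ne')).ne']

theorem mul_dist_le_dist_of_le_deriv {f : ℝ → ℝ} {C : ℝ} (hf : Differentiable ℝ f)
    (hC : ∀ x, C ≤ deriv f x) (x y : ℝ) : C * dist x y ≤ dist (f x) (f y) := by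
  obtain ⟨ξ, -, hξ⟩ := exists_mem_uIcc_dist_eq_abs_deriv_mul hf x y
  rw [hξ]
  exact mul_le_mul_of_nonneg_right ((hC ξ).trans (le_abs_self _)) dist_nonneg

theorem dist_div_dist_le_of_semiconj {F G H : ℝ → ℝ} {q r ρ : ℝ} (hF : Differentiable ℝ F)
    (hF_inj : Injective F) (hG : Differentiable ℝ G) (hFGH : Semiconj H F G)
    (hq : ∀ ξ ζ, dist ξ ζ < ρ → |deriv F ξ| ≤ q * |deriv G ζ|) (hH : ∀ x, dist (H x) x ≤ r)
    (hr : 5 * r < ρ) {x y : ℝ} (hxy : dist x y ≤ r) :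
    dist (H x) (H y) / dist x y ≤ q * (dist (H (F x)) (H (F y)) / dist (F x) (F y)) := by
  rcases eq_or_ne x y with rfl | hne
  · simp only [dist_self, div_zero, mul_zero, le_refl]
  obtain ⟨ξ, hξ, hFξ⟩ := exists_mem_uIcc_dist_eq_abs_deriv_mul hF x y
  obtain ⟨ζ, hζ, hGζ⟩ := exists_mem_uIcc_dist_eq_abs_deriv_mul hG (H x) (H y)
  have h_near : dist ξ ζ < ρ := by
    have hξx : dist x ξ ≤ dist x y := Real.dist_left_le_of_mem_uIcc hξ
    have hζx : dist (H x) ζ ≤ dist (H x) (H y) := Real.dist_left_le_of_mem_uIcc hζ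
    -- `|ξ - x| ≤ r`, `|x - H x| ≤ r` and `|H x - ζ| ≤ |H x - H y| ≤ 3 r`
    linarith [dist_triangle4 ξ x (H x) ζ, dist_triangle4 (H x) x y (H y), hH x, hH y,
      dist_comm ξ x, dist_comm x (H x), dist_comm y (H y)]
  have h_pos : 0 < |deriv F ξ| * dist x y := hFξ ▸ dist_pos.2 (hF_inj.ne hne)
  have hx_pos : 0 < dist x y := dist_pos.2 hne
  rw [hFGH, hFGH, hGζ, hFξ, mul_div_assoc', div_le_div_iff₀ hx_pos h_pos]
  calc dist (H x) (H y) * (|deriv F ξ| * dist x y)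
      ≤ dist (H x) (H y) * (q * |deriv G ζ| * dist x y) := by gcongr; exact hq ξ ζ h_near
    _ = q * (|deriv G ζ| * dist (H x) (H y)) * dist x y := by ring

end Derivative

section Periodic

theorem uniformContinuous_of_periodic {α : Type*} [UniformSpace α] {f : ℝ → α} {p : ℝ}
    (hp : 0 < p) (hf : Continuous f) (hfp : Periodic f p) : UniformContinuous f := by
  have : Fact (0 < p) := ⟨hp⟩
  have h_lift : UniformContinuous (hfp.lift : AddCircle p → α) :=
    CompactSpace.uniformContinuous_of_continuous (continuous_coinduced_dom.2 hf)
  have h_coe : UniformContinuous (QuotientAddGroup.mk' (AddSubgroup.zmultiples p)) :=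
    uniformContinuous_addMonoidHom_of_continuous continuous_quotient_mk'
  exact h_lift.comp h_coe

theorem exists_forall_norm_le_of_periodic {E : Type*} [SeminormedAddCommGroup E] {f : ℝ → E} {p : ℝ}
    (hp : p ≠ 0) (hf : Continuous f) (hfp : Periodic f p) : ∃ B, ∀ x, ‖f x‖ ≤ B := by
  simpa only [forall_mem_range] using (hfp.isBounded_of_continuous hp hf).exists_norm_le

theorem exists_forall_abs_sub_mul_le {F : ℝ → ℝ} {a : ℝ} (hF : Continuous F)
    (hFa : ∀ x, F (x + 1) = F x + a) : ∃ B, ∀ x, |F x - a * x| ≤ B :=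
  exists_forall_norm_le_of_periodic one_ne_zero (by fun_prop : Continuous fun x => F x - a * x)
    fun x => by simp only [hFa]; ring

theorem iterate_add_one_of_map_add_one {d : ℕ} {F : ℝ → ℝ} (hF : ∀ x, F (x + 1) = F x + d)
    (n : ℕ) (x : ℝ) : F^[n] (x + 1) = F^[n] x + d ^ n := by
  induction n with
  | zero => simp only [iterate_zero, id_eq, pow_zero]
  | succ n ih =>
    have h_nat := AddConstMapClass.map_add_nat' (⟨F, hF⟩ : AddConstMap ℝ ℝ 1 d) (F^[n] x) (d ^ n)
    simp only [AddConstMap.coe_mk, nsmul_eq_mul, Nat.cast_pow] at h_nat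
    rw [iterate_succ_apply', ih, iterate_succ_apply', h_nat, pow_succ]

theorem surjective_of_monotone_of_map_add_one {f : ℝ → ℝ} (hf : Continuous f) (hmono : Monotone f)
    (hf1 : ∀ x, f (x + 1) = f x + 1) : Surjective f :=
  (CircleDeg1Lift.continuous_iff_surjective ⟨⟨f, hmono⟩, hf1⟩).1 hf

end Periodic

/-- The linearizing coordinate `lim Fⁿ / aⁿ`, which semiconjugates `F` to `x ↦ a x` when `1 < a`
and `F` is at bounded distance from `x ↦ a x`. Its value is junk where the limit does not exist. -/
noncomputable def linearization (a : ℝ) (F : ℝ → ℝ) (x : ℝ) : ℝ :=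
  limUnder atTop fun n : ℕ => F^[n] x / a ^ n

namespace linearization

variable {a B : ℝ} {F : ℝ → ℝ}

theorem dist_iterate_div_pow_succ_le (ha : 1 < a) (hB : ∀ x, |F x - a * x| ≤ B) (x : ℝ) (n : ℕ) :
    dist (F^[n] x / a ^ n) (F^[n + 1] x / a ^ (n + 1)) ≤ B / a * a⁻¹ ^ n := by
  have ha0 : 0 < a := one_pos.trans ha
  have h_diff : F^[n + 1] x / a ^ (n + 1) - F^[n] x / a ^ n =
      (F (F^[n] x) - a * F^[n] x) / a ^ (n + 1) := by
    rw [iterate_succ_apply']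
    field_simp
    ring
  rw [dist_comm, Real.dist_eq, h_diff, abs_div, abs_of_pos (pow_pos ha0 (n + 1))]
  calc |F (F^[n] x) - a * F^[n] x| / a ^ (n + 1) ≤ B / a ^ (n + 1) := by gcongr; exact hB _
    _ = B / a * a⁻¹ ^ n := by rw [inv_pow, pow_succ']; field_simp

theorem tendsto (ha : 1 < a) (hB : ∀ x, |F x - a * x| ≤ B) (x : ℝ) :
    Tendsto (fun n : ℕ => F^[n] x / a ^ n) atTop (𝓝 (linearization a F x)) :=
  (cauchySeq_of_le_geometric _ _ (inv_lt_one_of_one_lt₀ ha)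
    (dist_iterate_div_pow_succ_le ha hB x)).tendsto_limUnder

theorem dist_iterate_div_pow_le (ha : 1 < a) (hB : ∀ x, |F x - a * x| ≤ B) (x : ℝ) (n : ℕ) :
    dist (F^[n] x / a ^ n) (linearization a F x) ≤ B / (a - 1) / a ^ n := by
  have ha1 : a - 1 ≠ 0 := (sub_pos.2 ha).ne'
  have ha0 : a ≠ 0 := (one_pos.trans ha).ne'
  calc _ ≤ B / a * a⁻¹ ^ n / (1 - a⁻¹) :=
        dist_le_of_le_geometric_of_tendsto _ _ (inv_lt_one_of_one_lt₀ ha)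
          (dist_iterate_div_pow_succ_le ha hB x) (tendsto ha hB x) n
    _ = B / (a - 1) / a ^ n := by rw [inv_pow]; field_simp

theorem dist_self_le (ha : 1 < a) (hB : ∀ x, |F x - a * x| ≤ B) (x : ℝ) :
    dist x (linearization a F x) ≤ B / (a - 1) := by
  simpa only [iterate_zero, id_eq, pow_zero, div_one] using dist_iterate_div_pow_le ha hB x 0

theorem semiconj (ha : 1 < a) (hB : ∀ x, |F x - a * x| ≤ B) :
    Semiconj (linearization a F) F (a * ·) := fun x => by
  have h_shift := ((tendsto_add_atTop_iff_nat 1).2 (tendsto ha hB x)).const_mul a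
  refine tendsto_nhds_unique (tendsto ha hB (F x)) (h_shift.congr fun n => ?_)
  have ha0 : a ≠ 0 := (one_pos.trans ha).ne'
  rw [iterate_succ_apply, pow_succ]
  field_simp

theorem continuous (ha : 1 < a) (hB : ∀ x, |F x - a * x| ≤ B) (hF : Continuous F) :
    Continuous (linearization a F) := by
  have h_unif : TendstoUniformly (fun (n : ℕ) x => F^[n] x / a ^ n) (linearization a F) atTop := by
    refine Metric.tendstoUniformly_iff.2 fun η hη => ?_
    have h_zero : Tendsto (fun n : ℕ => B / (a - 1) / a ^ n) atTop (𝓝 0) :=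
      (tendsto_pow_atTop_atTop_of_one_lt ha).const_div_atTop _
    filter_upwards [h_zero.eventually_lt_const hη] with n hn x
    rw [dist_comm]
    exact (dist_iterate_div_pow_le ha hB x n).trans_lt hn
  exact h_unif.continuous (Frequently.of_forall fun n => (hF.iterate n).div_const _)

theorem monotone (ha : 1 < a) (hB : ∀ x, |F x - a * x| ≤ B) (hF : Monotone F) :
    Monotone (linearization a F) := fun x y hxy =>
  le_of_tendsto_of_tendsto' (tendsto ha hB x) (tendsto ha hB y) fun n =>
    div_le_div_of_nonneg_right (hF.iterate n hxy) (pow_nonneg (one_pos.trans ha).le n)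

theorem injective (ha : 1 < a) (hB : ∀ x, |F x - a * x| ≤ B)
    (hF : ∀ ⦃x y⦄, x ≠ y → ∀ R, ∃ n, R < dist (F^[n] x) (F^[n] y)) :
    Injective (linearization a F) := fun x y hxy => by
  by_contra hne
  obtain ⟨n, hn⟩ := hF hne (B / (a - 1) + B / (a - 1))
  have h_image : linearization a F (F^[n] x) = linearization a F (F^[n] y) := by
    rw [(semiconj ha hB).iterate_right n x, (semiconj ha hB).iterate_right n y, hxy]
  have h_tri := dist_triangle_right (F^[n] x) (F^[n] y) (linearization a F (F^[n] x))
  have hx := dist_self_le ha hB (F^[n] x)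
  have hy := h_image ▸ dist_self_le ha hB (F^[n] y)
  linarith

theorem map_add_one {d : ℕ} (hd : 1 < d) (hB : ∀ x, |F x - d * x| ≤ B)
    (hF : ∀ x, F (x + 1) = F x + d) (x : ℝ) :
    linearization d F (x + 1) = linearization d F x + 1 := by
  have hd' : (1 : ℝ) < d := Nat.one_lt_cast.2 hd
  refine tendsto_nhds_unique (tendsto hd' hB (x + 1))
    (((tendsto hd' hB x).add_const 1).congr fun n => ?_)
  rw [iterate_add_one_of_map_add_one hF, add_div, div_self (pow_ne_zero n (by positivity))]

end linearization

/-- `H` is the lift of a conjugacy between the circle maps with lifts `F` and `G`, that is, an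
increasing homeomorphism commuting with `x ↦ x + 1` and carrying `F` to `G`. Surjectivity is
automatic and therefore not a field. -/
structure IsConjugacy (F G H : ℝ → ℝ) : Prop where
  continuous : Continuous H
  strictMono : StrictMono H
  map_add_one : ∀ x, H (x + 1) = H x + 1
  semiconj : Semiconj H F G

namespace IsConjugacy

variable {F G K H H' : ℝ → ℝ}

theorem trans (h : IsConjugacy F G H) (h' : IsConjugacy G K H') : IsConjugacy F K (H' ∘ H) where
  continuous := h'.continuous.comp h.continuous
  strictMono := h'.strictMono.comp h.strictMono
  map_add_one x := by simp only [comp_apply, h.map_add_one, h'.map_add_one]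
  semiconj := h'.semiconj.comp_left h.semiconj

theorem exists_symm (h : IsConjugacy F G H) : ∃ H', IsConjugacy G F H' := by
  let e := h.strictMono.orderIsoOfSurjective H
    (surjective_of_monotone_of_map_add_one h.continuous h.strictMono.monotone h.map_add_one)
  have he : ∀ x, H (e.symm x) = x := e.apply_symm_apply
  exact ⟨e.symm, {
    continuous := e.symm.continuous
    strictMono := e.symm.strictMono
    map_add_one := fun x => h.strictMono.injective <| by rw [h.map_add_one, he, he]
    semiconj := fun x => h.strictMono.injective <| by rw [h.semiconj, he, he] }⟩

theorem bddAbove_range_dist_self (h : IsConjugacy F G H) :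
    BddAbove (range fun x => dist (H x) x) := by
  obtain ⟨B, hB⟩ := exists_forall_abs_sub_mul_le h.continuous h.map_add_one
  exact ⟨B, forall_mem_range.2 fun x => by simpa only [one_mul, Real.dist_eq] using hB x⟩

end IsConjugacy

/-- `F` is the lift of a differentiable expanding circle map of degree `d`. In contrast to
`ExpandingLift`, the derivative need not be continuous; its positivity is the case `n = 1` of the
expansion bound. -/
structure DiffExpandingLift (d : ℕ) (F : ℝ → ℝ) : Prop where
  differentiable : Differentiable ℝ F
  map_add_one : ∀ x, F (x + 1) = F x + d
  exists_le_deriv_iterate : ∃ c > 0, ∃ lam > 1, ∀ x, ∀ n : ℕ, 1 ≤ n →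
    c * lam ^ n ≤ deriv F^[n] x

theorem ExpandingLift.diffExpandingLift {d : ℕ} {F : ℝ → ℝ} (hF : ExpandingLift d F) :
    DiffExpandingLift d F :=
  ⟨hF.1.differentiable two_ne_zero, hF.2.1, hF.2.2.2⟩

namespace DiffExpandingLift

variable {d : ℕ} {F G : ℝ → ℝ}

theorem exists_le_deriv (hF : DiffExpandingLift d F) : ∃ m > 0, ∀ x, m ≤ deriv F x := by
  obtain ⟨c, hc, lam, hlam, h⟩ := hF.exists_le_deriv_iterate
  exact ⟨c * lam ^ 1, by positivity, fun x => h x 1 le_rfl⟩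

theorem strictMono (hF : DiffExpandingLift d F) : StrictMono F :=
  let ⟨_, hm, h⟩ := hF.exists_le_deriv
  strictMono_of_deriv_pos fun x => hm.trans_le (h x)

theorem exists_mul_dist_le_dist_iterate (hF : DiffExpandingLift d F) :
    ∃ c > 0, ∃ lam > 1, ∀ n x y, c * lam ^ n * dist x y ≤ dist (F^[n] x) (F^[n] y) := by
  obtain ⟨c, hc, lam, hlam, h⟩ := hF.exists_le_deriv_iterate
  refine ⟨min c 1, by positivity, lam, hlam, fun n x y => ?_⟩
  rcases n.eq_zero_or_pos with rfl | hn
  · rw [pow_zero, mul_one]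
    exact mul_le_of_le_one_left dist_nonneg (min_le_right c 1)
  · refine mul_dist_le_dist_of_le_deriv (hF.differentiable.iterate n) (fun z => ?_) x y
    exact le_trans (by gcongr; exact min_le_left c 1) (h z n hn)

theorem periodic_deriv (hF : DiffExpandingLift d F) : Periodic (deriv F) 1 := fun x => by
  rw [← deriv_comp_add_const, funext hF.map_add_one, deriv_add_const]

theorem exists_lipschitzWith (hF : DiffExpandingLift d F) (hF' : Continuous (deriv F)) :
    ∃ L, LipschitzWith L F := by
  obtain ⟨L, hL⟩ := exists_forall_norm_le_of_periodic one_ne_zero hF' hF.periodic_deriv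
  exact ⟨L.toNNReal, lipschitzWith_of_nnnorm_deriv_le hF.differentiable fun x =>
    NNReal.le_toNNReal_of_coe_le (hL x)⟩

theorem isConjugacy_linearization (hd : 1 < d) (hF : DiffExpandingLift d F) :
    IsConjugacy F (d * ·) (linearization d F) := by
  have hd' : (1 : ℝ) < d := Nat.one_lt_cast.2 hd
  obtain ⟨c, hc, lam, hlam, h_exp⟩ := hF.exists_mul_dist_le_dist_iterate
  obtain ⟨B, hB⟩ := exists_forall_abs_sub_mul_le hF.differentiable.continuous hF.map_add_one
  exact {
    continuous := linearization.continuous hd' hB hF.differentiable.continuous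
    strictMono := (linearization.monotone hd' hB hF.strictMono.monotone).strictMono_of_injective
      (linearization.injective hd' hB fun _ _ hxy => exists_lt_dist_iterate hc hlam h_exp hxy)
    map_add_one := linearization.map_add_one hd hB hF.map_add_one
    semiconj := linearization.semiconj hd' hB }

theorem exists_isConjugacy (hd : 1 < d) (hF : DiffExpandingLift d F)
    (hG : DiffExpandingLift d G) : ∃ H, IsConjugacy F G H :=
  let ⟨_, hsymm⟩ := (hG.isConjugacy_linearization hd).exists_symm
  ⟨_, (hF.isConjugacy_linearization hd).trans hsymm⟩

theorem exists_forall_isConjugacy_dist_self_le (hF : DiffExpandingLift d F)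
    (hF_unif : UniformContinuous F) {r : ℝ} (hr : 0 < r) :
    ∃ δ > 0, ∀ ⦃G H : ℝ → ℝ⦄, (∀ x, dist (F x) (G x) < δ) → IsConjugacy F G H →
      ∀ x, dist (H x) x ≤ r := by
  obtain ⟨c, hc, lam, hlam, h_exp⟩ := hF.exists_mul_dist_le_dist_iterate
  obtain ⟨N, hN⟩ := pow_unbounded_of_one_lt (2 / c) hlam
  rw [div_lt_iff₀' hc] at hN
  have h_double : ∀ x y, 2 * dist x y ≤ dist (F^[N] x) (F^[N] y) := fun x y =>
    (mul_le_mul_of_nonneg_right hN.le dist_nonneg).trans (h_exp N x y)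
  obtain ⟨δ, hδ, h_iter⟩ := exists_forall_dist_iterate_lt hF_unif N hr
  refine ⟨δ, hδ, fun G H hFG hH x => ?_⟩
  calc dist (H x) x ≤ r / (2 - 1) :=
        dist_semiconj_self_le one_lt_two h_double (fun z => (h_iter G hFG z).le)
          (hH.semiconj.iterate_right N) hH.bddAbove_range_dist_self x
    _ = r := by norm_num

end DiffExpandingLift

theorem stmt13_general {d : ℕ} (hd : 2 ≤ d) {F : ℝ → ℝ} (hF : DiffExpandingLift d F)
    (hF' : Continuous (deriv F)) {ε : ℝ} (hε : 0 < ε) :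
    ∃ δ > 0, ∃ C > 0, ∀ G : ℝ → ℝ, DiffExpandingLift d G →
      (∀ x, |F x - G x| + |deriv F x - deriv G x| < δ) →
      ∃ H : ℝ → ℝ, Continuous H ∧ StrictMono H ∧ (∀ x, H (x + 1) = H x + 1) ∧
        (∀ x, H (F x) = G (H x)) ∧
        ∀ x y, |x - y| ≤ 1 → |H x - H y| ≤ C * |x - y| ^ (1 - ε) := by
  obtain ⟨c, hc, lam, hlam, h_exp⟩ := hF.exists_mul_dist_le_dist_iterate
  obtain ⟨L, hL⟩ := hF.exists_lipschitzWith hF'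
  obtain ⟨m, hm, hFm⟩ := hF.exists_le_deriv
  obtain ⟨ρ, hρ, δ₁, hδ₁, h_ratio⟩ := exists_forall_norm_le_mul_norm
    (uniformContinuous_of_periodic one_pos hF' hF.periodic_deriv) hm
    (fun x => (hFm x).trans (le_abs_self _)) (Real.one_lt_rpow hlam hε)
  obtain ⟨δ₀, hδ₀, h_near⟩ :=
    hF.exists_forall_isConjugacy_dist_self_le hL.uniformContinuous (r := ρ / 6) (by positivity)
  refine ⟨min δ₀ δ₁, lt_min hδ₀ hδ₁, 3 * (max 1 (L * (ρ / 6)) / c) ^ ε, by positivity,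
    fun G hG hFG => ?_⟩
  have hFG₀ : ∀ x, dist (F x) (G x) < δ₀ := fun x =>
    (le_add_of_nonneg_right (abs_nonneg _)).trans_lt ((hFG x).trans_le (min_le_left _ _))
  have hFG₁ : ∀ x, dist (deriv F x) (deriv G x) < δ₁ := fun x =>
    (le_add_of_nonneg_left (abs_nonneg _)).trans_lt ((hFG x).trans_le (min_le_right _ _))
  obtain ⟨H, hH⟩ := hF.exists_isConjugacy hd hG
  have hHr := h_near hFG₀ hH
  refine ⟨H, hH.continuous, hH.strictMono, hH.map_add_one, hH.semiconj, fun x y =>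
    dist_le_mul_rpow_of_expanding hc hlam hε.le hL h_exp hHr fun u v => ?_⟩
  exact dist_div_dist_le_of_semiconj hF.differentiable hF.strictMono.injective hG.differentiable
    hH.semiconj (h_ratio _ hFG₁) hHr (by linarith)

theorem stmt13 (d : ℕ) (hd : 2 ≤ d) (F : ℝ → ℝ) (hF : ExpandingLift d F)
    (ε : ℝ) (hε0 : 0 < ε) (hε1 : ε < 1) :
    ∃ δ : ℝ, 0 < δ ∧ ∃ C : ℝ, 0 < C ∧
      ∀ G : ℝ → ℝ, ExpandingLift d G →
        (∀ x : ℝ, |F x - G x| + |deriv F x - deriv G x| +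
          |deriv (deriv F) x - deriv (deriv G) x| < δ) →
        ∃ H : ℝ → ℝ, Continuous H ∧ StrictMono H ∧ (∀ x : ℝ, H (x + 1) = H x + 1) ∧
          (∀ x : ℝ, H (F x) = G (H x)) ∧
          ∀ x y : ℝ, |x - y| ≤ 1 → |H x - H y| ≤ C * |x - y| ^ (1 - ε) := by
  obtain ⟨δ, hδ, C, hC, h⟩ := stmt13_general hd hF.diffExpandingLift
    (hF.1.continuous_deriv one_le_two) hε0
  exact ⟨δ, hδ, C, hC, fun G hG hFG => h G hG.diffExpandingLift fun x =>
    (le_add_of_nonneg_right (abs_nonneg _)).trans_lt (hFG x)⟩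
end

section
/- Let μ be a finite Borel measure on ℝ, let a < b be real numbers, and let f : [a,b] → ℝ be differentiable at every point of [a,b] with derivative f' Lebesgue-integrable on [a,b]. Then ∫_{[a,b]} f dμ = f(b)·μ([a,b]) − ∫_a^b f'(s)·μ([a,s]) ds. -/
/-!
Since `f x = f b - ∫ s in x..b, f' s` on `[a, b]`, integrating against `μ` leaves the integral of
`f' s` over the triangle `a ≤ x ≤ s ≤ b` with respect to `μ ⊗ ds`. By Fubini this can be computed
slice by slice in `s`, and the slice over `s` has `μ`-measure `μ [a, s]`.
-/

open MeasureTheory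

section Triangle

variable {α E : Type*} [LinearOrder α] [TopologicalSpace α] [OrderClosedTopology α]
  [SecondCountableTopology α] [MeasurableSpace α] [OpensMeasurableSpace α]
  [NormedAddCommGroup E] {μ ν : Measure α} {g : α → E}

theorem integrable_prod_indicator_Ici [IsFiniteMeasure μ] [SFinite ν] (hg : Integrable g ν) :
    Integrable (fun p : α × α ↦ (Set.Ici p.1).indicator g p.2) (μ.prod ν) :=
  (hg.comp_snd μ).indicator measurableSet_le'

variable [NormedSpace ℝ E] [CompleteSpace E]

theorem integral_setIntegral_Ici [IsFiniteMeasure μ] [SFinite ν] (hg : Integrable g ν) :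
    ∫ x, ∫ s in Set.Ici x, g s ∂ν ∂μ = ∫ s, μ.real (Set.Iic s) • g s ∂ν := by
  calc ∫ x, ∫ s in Set.Ici x, g s ∂ν ∂μ
      = ∫ x, ∫ s, (Set.Ici x).indicator g s ∂ν ∂μ := by
        simp only [integral_indicator measurableSet_Ici]
    _ = ∫ s, ∫ x, (Set.Ici x).indicator g s ∂μ ∂ν :=
        integral_integral_swap (integrable_prod_indicator_Ici hg)
    _ = ∫ s, ∫ x, (Set.Iic s).indicator (fun _ ↦ g s) x ∂μ ∂ν := rfl
    _ = ∫ s, μ.real (Set.Iic s) • g s ∂ν := by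
        simp only [integral_indicator_const _ measurableSet_Iic]

theorem setIntegral_Icc_setIntegral_Icc [SFinite ν] {a b : α}
    (hμ : μ (Set.Icc a b) ≠ ⊤) (hg : IntegrableOn g (Set.Icc a b) ν) :
    ∫ x in Set.Icc a b, ∫ s in Set.Icc x b, g s ∂ν ∂μ =
      ∫ s in Set.Icc a b, μ.real (Set.Icc a s) • g s ∂ν := by
  have : IsFiniteMeasure (μ.restrict (Set.Icc a b)) := isFiniteMeasure_restrict.2 hμ
  have inter_Ici : ∀ x ∈ Set.Icc a b, Set.Ici x ∩ Set.Icc a b = Set.Icc x b := by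
    grind
  have inter_Iic : ∀ s ∈ Set.Icc a b, Set.Iic s ∩ Set.Icc a b = Set.Icc a s := by
    grind
  calc ∫ x in Set.Icc a b, ∫ s in Set.Icc x b, g s ∂ν ∂μ
      = ∫ x in Set.Icc a b, ∫ s in Set.Ici x, g s ∂(ν.restrict (Set.Icc a b)) ∂μ :=
        setIntegral_congr_fun measurableSet_Icc fun x hx ↦ by
          simp only [Measure.restrict_restrict measurableSet_Ici, inter_Ici x hx]
    _ = ∫ s in Set.Icc a b, (μ.restrict (Set.Icc a b)).real (Set.Iic s) • g s ∂ν :=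
        integral_setIntegral_Ici hg
    _ = ∫ s in Set.Icc a b, μ.real (Set.Icc a s) • g s ∂ν :=
        setIntegral_congr_fun measurableSet_Icc fun s hs ↦ by
          simp only [measureReal_restrict_apply measurableSet_Iic, inter_Iic s hs]

end Triangle

theorem setIntegral_Icc_eq_sub_of_hasDerivAt_off_countable {E : Type*} [NormedAddCommGroup E]
    [NormedSpace ℝ E] [CompleteSpace E] {f f' : ℝ → E} {a b : ℝ} {t : Set ℝ} (hab : a ≤ b)
    (ht : t.Countable) (hf : ContinuousOn f (Set.Icc a b))
    (hderiv : ∀ x ∈ Set.Ioo a b \ t, HasDerivAt f (f' x) x)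
    (hf' : IntegrableOn f' (Set.Icc a b)) :
    ∫ s in Set.Icc a b, f' s = f b - f a := by
  rw [integral_Icc_eq_integral_Ioc, ← intervalIntegral.integral_of_le hab]
  exact integral_eq_of_hasDerivAt_off_countable_of_le f f' hab ht hf hderiv
    ((intervalIntegrable_iff_integrableOn_Icc_of_le hab).2 hf')

theorem stmt18_general {E : Type*} [NormedAddCommGroup E] [NormedSpace ℝ E] [CompleteSpace E]
    {μ : Measure ℝ} {f f' : ℝ → E} {a b : ℝ} {t : Set ℝ} (hab : a ≤ b)
    (hμ : μ (Set.Icc a b) ≠ ⊤) (ht : t.Countable) (hf : ContinuousOn f (Set.Icc a b))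
    (hderiv : ∀ x ∈ Set.Ioo a b \ t, HasDerivAt f (f' x) x)
    (hf' : IntegrableOn f' (Set.Icc a b)) :
    ∫ x in Set.Icc a b, f x ∂μ =
      μ.real (Set.Icc a b) • f b - ∫ s in a..b, μ.real (Set.Icc a s) • f' s := by
  have hf_int : IntegrableOn f (Set.Icc a b) μ :=
    hf.integrableOn_of_subset_isCompact isCompact_Icc measurableSet_Icc subset_rfl hμ
  have hfb_int : IntegrableOn (fun _ ↦ f b) (Set.Icc a b) μ := integrableOn_const hμ
  have tail_integral : ∀ x ∈ Set.Icc a b, ∫ s in Set.Icc x b, f' s = f b - f x := by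
    intro x ⟨hax, hxb⟩
    have subset_Icc : Set.Icc x b ⊆ Set.Icc a b := Set.Icc_subset_Icc_left hax
    exact setIntegral_Icc_eq_sub_of_hasDerivAt_off_countable hxb ht (hf.mono subset_Icc)
      (fun y hy ↦ hderiv y ⟨Set.Ioo_subset_Ioo_left hax hy.1, hy.2⟩) (hf'.mono_set subset_Icc)
  have fubini : ∫ s in a..b, μ.real (Set.Icc a s) • f' s =
      μ.real (Set.Icc a b) • f b - ∫ x in Set.Icc a b, f x ∂μ := by
    calc ∫ s in a..b, μ.real (Set.Icc a s) • f' s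
        = ∫ s in Set.Icc a b, μ.real (Set.Icc a s) • f' s := by
          rw [intervalIntegral.integral_of_le hab, integral_Icc_eq_integral_Ioc]
      _ = ∫ x in Set.Icc a b, ∫ s in Set.Icc x b, f' s ∂volume ∂μ :=
          (setIntegral_Icc_setIntegral_Icc hμ hf').symm
      _ = ∫ x in Set.Icc a b, (f b - f x) ∂μ :=
          setIntegral_congr_fun measurableSet_Icc tail_integral
      _ = μ.real (Set.Icc a b) • f b - ∫ x in Set.Icc a b, f x ∂μ := by
          rw [integral_sub hfb_int hf_int, setIntegral_const]
  rw [fubini, sub_sub_cancel]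

theorem stmt18 (μ : Measure ℝ) [IsFiniteMeasure μ] (a b : ℝ) (hab : a < b)
    (f : ℝ → ℝ) (hf : ∀ x ∈ Set.Icc a b, DifferentiableAt ℝ f x)
    (hf' : IntegrableOn (deriv f) (Set.Icc a b) volume) :
    ∫ x in Set.Icc a b, f x ∂μ =
      f b * (μ (Set.Icc a b)).toReal -
        ∫ s in a..b, deriv f s * (μ (Set.Icc a s)).toReal := by
  simpa only [smul_eq_mul, Measure.real, mul_comm] using
    stmt18_general hab.le (measure_ne_top μ _) Set.countable_empty
      (fun x hx ↦ (hf x hx).continuousAt.continuousWithinAt)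
      (fun x hx ↦ (hf x (Set.Ioo_subset_Icc_self hx.1)).hasDerivAt) hf'
end
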